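/- Let f ∈ ℤ^r and let E, E* ⊆ ℤ^r be subsets satisfying the duality relations: for every β ∈ ℤ^r, β ∈ E* if and only if F(E, f − β) = ∅, and for every β ∈ ℤ^r, β ∈ E if and only if F(E*, f − β) = ∅. Let α ∈ E ∩ E*. Then for every a ∈ ℤ^r with a ∈ A_α(E), one has F(E*, f + α − a) ≠ ∅ and F(E*, f + α − a) ⊆ A_α(E*). -/

import Mathlib

/-!
Both claims concern the base point `f + α - a = f - (a - α)`. Since `a - α ∉ E`, duality makes the
fiber of `E*` there nonempty. If some `b` in it had `b - α ∈ E*`, then translating by `-α` would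
put `b - α` in `F(E*, f - a)`, which duality makes empty because `a ∈ E`.
-/

/-- The fiber `F_J(E,α)` of `α` with respect to a subset `J` of indices. -/
def FJ {ι : Type*} (E : Set (ι → ℤ)) (J : Set ι) (α : ι → ℤ) : Set (ι → ℤ) :=
  {β ∈ E | (∀ j ∈ J, β j = α j) ∧ ∀ j ∉ J, α j < β j}

/-- The fiber `F(E,α) = ⋃ᵢ F_{{i}}(E,α)` of `α`. -/
def Fib {ι : Type*} (E : Set (ι → ℤ)) (α : ι → ℤ) : Set (ι → ℤ) :=
  ⋃ i : ι, FJ E {i} α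

/-- The closed fiber `F̄_i(E,α)`. -/
def FibBar {ι : Type*} (E : Set (ι → ℤ)) (i : ι) (α : ι → ℤ) : Set (ι → ℤ) :=
  {β ∈ E | β i = α i ∧ ∀ j ≠ i, α j ≤ β j}

/-- The Apéry set `A_α(E) = {β ∈ E : β - α ∉ E}`. -/
def Apery {ι : Type*} (E : Set (ι → ℤ)) (α : ι → ℤ) : Set (ι → ℤ) :=
  {β ∈ E | β - α ∉ E}

section Fiber

variable {ι : Type*} {E E' : Set (ι → ℤ)} {α β δ : ι → ℤ}

theorem Fib_subset : Fib E α ⊆ E :=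
  Set.iUnion_subset fun _ _ hβ => hβ.1

theorem sub_mem_FJ_sub {J : Set ι} (hβ : β ∈ FJ E J α) (hβδ : β - δ ∈ E') :
    β - δ ∈ FJ E' J (α - δ) := by
  obtain ⟨-, heq, hlt⟩ := hβ
  exact ⟨hβδ, fun j hj => congrArg (· - δ j) (heq j hj),
    fun j hj => sub_lt_sub_right (hlt j hj) (δ j)⟩

theorem sub_mem_Fib_sub (hβ : β ∈ Fib E α) (hβδ : β - δ ∈ E') :
    β - δ ∈ Fib E' (α - δ) := by
  obtain ⟨i, hi⟩ := Set.mem_iUnion.mp hβ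
  exact Set.mem_iUnion.mpr ⟨i, sub_mem_FJ_sub hi hβδ⟩

theorem Fib_subset_Apery_of_Fib_sub_eq_empty (h : Fib E (β - α) = ∅) :
    Fib E β ⊆ Apery E α :=
  fun _ hb => ⟨Fib_subset hb,
    fun hbα => Set.eq_empty_iff_forall_notMem.mp h _ (sub_mem_Fib_sub hb hbα)⟩

end Fiber

theorem stmt_9_general {ι : Type*} {f : ι → ℤ} {E Estar : Set (ι → ℤ)}
    (hdual : ∀ β : ι → ℤ, β ∈ E ↔ Fib Estar (f - β) = ∅) {α a : ι → ℤ} (ha : a ∈ Apery E α) :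
    (Fib Estar (f + α - a)).Nonempty ∧ Fib Estar (f + α - a) ⊆ Apery Estar α := by
  obtain ⟨haE, haα⟩ := ha
  constructor
  · rw [← sub_sub_eq_add_sub, Set.nonempty_iff_ne_empty]
    exact mt (hdual (a - α)).mpr haα
  · apply Fib_subset_Apery_of_Fib_sub_eq_empty
    rw [show f + α - a - α = f - a by abel]
    exact (hdual a).mp haE

/-- Let `f ∈ ℤ^r` and `E, E* ⊆ ℤ^r` satisfy the duality relations
`β ∈ E* ↔ F(E, f−β) = ∅` and `β ∈ E ↔ F(E*, f−β) = ∅`. Let `α ∈ E ∩ E*`. Then for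
every `a ∈ A_α(E)` one has `F(E*, f+α−a) ≠ ∅` and `F(E*, f+α−a) ⊆ A_α(E*)`. -/
theorem stmt_9 {r : ℕ} (f : Fin r → ℤ) (E Estar : Set (Fin r → ℤ))
    (hdual₁ : ∀ β : Fin r → ℤ, β ∈ Estar ↔ Fib E (f - β) = ∅)
    (hdual₂ : ∀ β : Fin r → ℤ, β ∈ E ↔ Fib Estar (f - β) = ∅)
    (α : Fin r → ℤ) (hα : α ∈ E ∩ Estar) :
    ∀ a : Fin r → ℤ, a ∈ Apery E α →
      (Fib Estar (f + α - a)).Nonempty ∧ Fib Estar (f + α - a) ⊆ Apery Estar α :=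
  fun _ ha => stmt_9_general hdual₂ ha
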